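/- Fix constants 0 < C₁ < C₂ and 0 < ε < 1/2. There exist infinitely many triples (a, b, n) of natural numbers with εn ≤ a, b ≤ (1−ε)n such that a! · b! divides n! · (a+b−n)! and C₁ log n < a + b − n < C₂ log n. -/

import Mathlib

open Real

/-!
Write `k` for the gap and take `(a, b, n) = (m, m + k, 2 m)`. The divisibility then says that
`(m + k).choose k` divides `m.centralBinom`, which Kummer's theorem turns into a comparison of
carries for each prime `p`. If `2 * k ≤ p`, every carry of `k + m` in base `p` is also a carry of
`m + m`. If `p < 2 * k`, then `m + m` has at least as many carries as `m` has digits `d` with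
`p ≤ 2 * d`, which for typical `m` is a positive proportion of all digits, while `k + m` has at most
`J` carries unless `p ^ J` divides one of `m + 1, …, m + k`. With `J` of order `log k`, counting
shows that the exceptional `m` for the fewer than `2 * k` small primes do not fill an interval of
length `exp (O(log² k))`. This is less than `exp (c * k)`, so `m` may be chosen with `log m` close
to `c * k`.
-/

open Filter Finset

section Counting

theorem sum_range_mul_eq_sum_sum {M : Type*} [AddCommMonoid M] (a b : ℕ) (f : ℕ → M) :
    ∑ m ∈ range (a * b), f m = ∑ q ∈ range b, ∑ r ∈ range a, f (r + a * q) := by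
  induction b with
  | zero => simp
  | succ b ih => simp only [mul_add_one, sum_range_add, sum_range_succ, ih, add_comm _ (a * b)]

theorem card_filter_mul_pow_le_sum_pow {ι R : Type*} [CommSemiring R] [PartialOrder R]
    [IsOrderedRing R] {x : R} (hx₀ : 0 ≤ x) (hx₁ : x ≤ 1) (s : Finset ι) (f : ι → ℕ) (J : ℕ) :
    (#{i ∈ s | f i < J} : R) * x ^ J ≤ ∑ i ∈ s, x ^ f i :=
  calc (#{i ∈ s | f i < J} : R) * x ^ J
      = ∑ i ∈ s with f i < J, x ^ J := by rw [sum_const, nsmul_eq_mul]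
    _ ≤ ∑ i ∈ s with f i < J, x ^ f i :=
      sum_le_sum fun _ hi ↦ pow_le_pow_of_le_one hx₀ hx₁ (mem_filter.1 hi).2.le
    _ ≤ ∑ i ∈ s, x ^ f i :=
      sum_le_sum_of_subset_of_nonneg (filter_subset _ _) fun _ _ _ ↦ pow_nonneg hx₀ _

variable {P : ℕ → Prop} [DecidablePred P] {q : ℕ}

theorem card_filter_Ico_add_mul_of_periodic (hP : Function.Periodic P q) (n t : ℕ) :
    #{m ∈ Ico n (n + t * q) | P m} = t * q.count P := by
  induction t with
  | zero => simp
  | succ t ih =>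
    have h_split : Ico n (n + (t + 1) * q) =
        Ico n (n + t * q) ∪ Ico (n + t * q) (n + t * q + q) := by
      rw [Ico_union_Ico_eq_Ico (by omega) (by omega), add_one_mul, add_assoc]
    rw [h_split, filter_union,
      card_union_of_disjoint (disjoint_filter_filter (Ico_disjoint_Ico_consecutive _ _ _)), ih,
      Nat.filter_Ico_card_eq_of_periodic _ _ _ hP, add_one_mul]

theorem mul_card_filter_Ico_le_of_periodic (hP : Function.Periodic P q) (hq : 0 < q) {d : ℕ}
    (hd : d * q.count P ≤ q) {l : ℕ} (hl : q ≤ l) (n : ℕ) :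
    d * #{m ∈ Ico n (n + l) | P m} ≤ 2 * l := by
  have h_cover : l ≤ (l / q + 1) * q := by
    rw [mul_comm]
    exact (Nat.lt_mul_div_succ l hq).le
  calc d * #{m ∈ Ico n (n + l) | P m}
      ≤ d * #{m ∈ Ico n (n + (l / q + 1) * q) | P m} := by gcongr
    _ = (l / q + 1) * (d * q.count P) := by
      rw [card_filter_Ico_add_mul_of_periodic hP, mul_left_comm]
    _ ≤ (l / q + 1) * q := by gcongr
    _ ≤ 2 * l := by linarith [Nat.div_mul_le_self l q]

theorem mul_card_filter_Ico_dvd_add_le {l : ℕ} (hl : q ≤ l) (n i : ℕ) :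
    q * #{m ∈ Ico n (n + l) | q ∣ m + i} ≤ 2 * l := by
  rcases q.eq_zero_or_pos with rfl | hq
  · simp
  have h_periodic : Function.Periodic (fun m ↦ q ∣ m + i) q := fun m ↦ by
    simp only [add_right_comm m q i, Nat.dvd_add_self_right]
  have h_count : q.count (fun m ↦ q ∣ m + i) ≤ 1 := by
    rw [Nat.count_eq_card_filter_range, card_le_one]
    intro a ha b hb
    rw [mem_filter, mem_range] at ha hb
    have h_modEq : a + i ≡ b + i [MOD q] :=
      (Nat.modEq_zero_iff_dvd.2 ha.2).trans (Nat.modEq_zero_iff_dvd.2 hb.2).symm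
    exact (Nat.ModEq.add_right_cancel' i h_modEq).eq_of_lt_of_lt ha.1 hb.1
  exact mul_card_filter_Ico_le_of_periodic h_periodic hq
    (by simpa using Nat.mul_le_mul_left q h_count) hl n

end Counting

/-- The number of large digits, i.e. digits `d` with `p ≤ 2 * d`, among the last `L` base-`p` digits
of `m`. Each of them produces a carry in the addition `m + m`, whatever the lower digits are. -/
def largeDigitCount (p L m : ℕ) : ℕ :=
  L.count fun i ↦ p ≤ 2 * (m / p ^ i % p)

section LargeDigits

theorem largeDigitCount_succ_add_mul {p d : ℕ} (hd : d < p) (L m : ℕ) :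
    largeDigitCount p (L + 1) (d + p * m) =
      (if p ≤ 2 * d then 1 else 0) + largeDigitCount p L m := by
  have h_shift (i : ℕ) : (d + p * m) / p ^ (i + 1) = m / p ^ i := by
    rw [pow_succ', ← Nat.div_div_eq_div_mul, Nat.add_mul_div_left _ _ (by omega),
      Nat.div_eq_of_lt hd, zero_add]
  simp only [largeDigitCount, Nat.count_succ', h_shift, pow_zero, Nat.div_one,
    Nat.add_mul_mod_self_left, Nat.mod_eq_of_lt hd, add_comm]

theorem largeDigitCount_periodic (p L : ℕ) : Function.Periodic (largeDigitCount p L) (p ^ L) := by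
  intro m
  rcases Nat.eq_zero_or_pos p with rfl | hp
  · cases L <;> simp [largeDigitCount]
  have h_digit (i : ℕ) (hi : i < L) : (m + p ^ L) / p ^ i % p = m / p ^ i % p := by
    obtain ⟨t, rfl⟩ := Nat.exists_eq_add_of_lt hi
    rw [add_assoc, pow_add, pow_succ', Nat.add_mul_div_left _ _ (pow_pos hp i),
      Nat.add_mul_mod_self_left]
  unfold largeDigitCount
  exact le_antisymm (Nat.count_mono_left fun i hi h ↦ by rwa [h_digit i hi] at h)
    (Nat.count_mono_left fun i hi h ↦ by rwa [h_digit i hi])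

theorem sum_range_pow_ite_large {R : Type*} [CommSemiring R] (p : ℕ) (x : R) :
    ∑ d ∈ range p, x ^ (if p ≤ 2 * d then 1 else 0) =
      ((p - p / 2 : ℕ) : R) + (p / 2 : ℕ) * x := by
  rw [← sum_range_add_sum_Ico _ (Nat.sub_le p (p / 2)),
    sum_congr rfl (g := fun _ ↦ 1) fun d hd ↦ by
      rw [mem_range] at hd
      rw [if_neg (by omega), pow_zero],
    sum_congr (s₁ := Ico _ _) rfl (g := fun _ ↦ x) fun d hd ↦ by
      rw [mem_Ico] at hd
      rw [if_pos (by omega), pow_one]]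
  simp [Nat.sub_sub_self (Nat.div_le_self p 2)]

theorem sum_range_pow_largeDigitCount {R : Type*} [CommSemiring R] (p L : ℕ) (x : R) :
    ∑ m ∈ range (p ^ L), x ^ largeDigitCount p L m =
      (((p - p / 2 : ℕ) : R) + (p / 2 : ℕ) * x) ^ L := by
  induction L with
  | zero => simp [largeDigitCount]
  | succ L ih =>
    rw [pow_succ' p, sum_range_mul_eq_sum_sum, pow_succ', ← ih, ← sum_range_pow_ite_large,
      sum_mul_sum, sum_comm]
    refine sum_congr rfl fun d hd ↦ sum_congr rfl fun m _ ↦ ?_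
    rw [largeDigitCount_succ_add_mul (mem_range.1 hd), pow_add]

/-- Chernoff's bound: at least a third of the residues below `p` are large digits, and the number
`8` of digits per required large digit comes from `4 * (5 / 6) ^ 8 ≤ 1`. -/
theorem two_pow_mul_count_largeDigitCount_lt_le {p : ℕ} (hp : 2 ≤ p) (J : ℕ) :
    2 ^ J * (p ^ (8 * J)).count (fun m ↦ largeDigitCount p (8 * J) m < J) ≤ p ^ (8 * J) := by
  have h_base : ((p - p / 2 : ℕ) : ℝ) + (p / 2 : ℕ) * (1 / 2) ≤ 5 / 6 * p := by
    have h_third : (p : ℝ) ≤ 3 * (p / 2 : ℕ) := by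
      exact_mod_cast (by omega : p ≤ 3 * (p / 2))
    rw [Nat.cast_sub (Nat.div_le_self p 2)]
    linarith
  set N := (p ^ (8 * J)).count (fun m ↦ largeDigitCount p (8 * J) m < J) with hN
  have h_markov : (N : ℝ) * (1 / 2) ^ J ≤ (5 / 6 * p) ^ (8 * J) :=
    calc (N : ℝ) * (1 / 2) ^ J
        ≤ ∑ m ∈ range (p ^ (8 * J)), (1 / 2 : ℝ) ^ largeDigitCount p (8 * J) m := by
          rw [hN, Nat.count_eq_card_filter_range]
          exact card_filter_mul_pow_le_sum_pow (by norm_num) (by norm_num) _ _ _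
      _ ≤ (5 / 6 * p) ^ (8 * J) := by
          rw [sum_range_pow_largeDigitCount]
          gcongr
  have h_real : (2 : ℝ) ^ J * N ≤ p ^ (8 * J) :=
    calc (2 : ℝ) ^ J * N = 4 ^ J * (N * (1 / 2) ^ J) := by
          rw [mul_left_comm, ← mul_pow, mul_comm]; norm_num
      _ ≤ 4 ^ J * (5 / 6 * p) ^ (8 * J) := by gcongr
      _ = (4 * (5 / 6) ^ 8) ^ J * p ^ (8 * J) := by rw [mul_pow, pow_mul, ← mul_assoc, ← mul_pow]
      _ ≤ 1 * p ^ (8 * J) := by gcongr; exact pow_le_one₀ (by norm_num) (by norm_num)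
      _ = p ^ (8 * J) := one_mul _
  exact_mod_cast h_real

theorem two_pow_mul_card_filter_largeDigitCount_lt_le {p J l : ℕ} (hp : 2 ≤ p)
    (hl : p ^ (8 * J) ≤ l) (n : ℕ) :
    2 ^ J * #{m ∈ Ico n (n + l) | largeDigitCount p (8 * J) m < J} ≤ 2 * l :=
  mul_card_filter_Ico_le_of_periodic ((largeDigitCount_periodic p _).comp (· < J)) (by positivity)
    (two_pow_mul_count_largeDigitCount_lt_le hp J) hl n

end LargeDigits

section Carries

variable {p : ℕ}

theorem largeDigitCount_le_factorization_centralBinom (hp : p.Prime) (L m : ℕ) :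
    largeDigitCount p L m ≤ m.centralBinom.factorization p := by
  rw [Nat.centralBinom_eq_two_mul_choose, two_mul,
    Nat.factorization_choose' (b := Nat.log p (m + m) + L + 1) hp (by omega),
    largeDigitCount, Nat.count_eq_card_filter_range]
  refine card_le_card_of_injOn (· + 1) (fun i hi ↦ ?_) (add_left_injective 1).injOn
  simp only [mem_coe, mem_filter, mem_range, mem_Ico] at hi ⊢
  refine ⟨by omega, ?_⟩
  calc p ^ (i + 1) = p ^ i * p := pow_succ p i
    _ ≤ p ^ i * (2 * (m / p ^ i % p)) := by gcongr; exact hi.2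
    _ ≤ m % p ^ (i + 1) + m % p ^ (i + 1) := by
      rw [Nat.mod_pow_succ, mul_left_comm, two_mul]
      gcongr <;> exact Nat.le_add_left _ _

theorem exists_dvd_add_of_le_mod_add_mod {q k m : ℕ} (hq : 0 < q) (h : q ≤ k % q + m % q) :
    ∃ i ∈ Icc 1 k, q ∣ m + i := by
  have h_mod : m % q < q := Nat.mod_lt m hq
  have h_k : k % q ≤ k := Nat.mod_le k q
  refine ⟨q - m % q, mem_Icc.2 ⟨by omega, by omega⟩, m / q + 1, ?_⟩
  rw [mul_add_one]
  have := Nat.div_add_mod m q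
  omega

theorem factorization_choose_add_le_of_forall_not_dvd (hp : p.Prime) {k m J : ℕ}
    (h : ∀ i ∈ Icc 1 k, ¬ p ^ J ∣ m + i) :
    ((m + k).choose k).factorization p ≤ J := by
  rw [Nat.factorization_choose' hp (Nat.lt_succ_self _)]
  calc #{j ∈ Ico 1 (Nat.log p (m + k) + 1) | p ^ j ≤ k % p ^ j + m % p ^ j}
      ≤ #(range J) := card_le_card fun j hj ↦ by
        obtain ⟨i, hi, hdvd⟩ :=
          exists_dvd_add_of_le_mod_add_mod (pow_pos hp.pos j) (mem_filter.1 hj).2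
        rw [mem_range]
        by_contra! hJ
        exact h i hi ((pow_dvd_pow p hJ).trans hdvd)
    _ = J := card_range J

theorem factorization_choose_add_le_centralBinom_of_le (hp : p.Prime) {k : ℕ} (hk : 2 * k ≤ p)
    (m : ℕ) : ((m + k).choose k).factorization p ≤ m.centralBinom.factorization p := by
  have h₁ : Nat.log p (m + k) < Nat.log p (m + k) + Nat.log p (m + m) + 1 := by omega
  have h₂ : Nat.log p (m + m) < Nat.log p (m + k) + Nat.log p (m + m) + 1 := by omega
  rw [Nat.centralBinom_eq_two_mul_choose, two_mul, Nat.factorization_choose' hp h₁,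
    Nat.factorization_choose' hp h₂]
  refine card_le_card fun j hj ↦ ?_
  rw [mem_filter, mem_Ico] at hj ⊢
  refine ⟨hj.1, ?_⟩
  have h_pow : p ≤ p ^ j := Nat.le_self_pow (by omega) p
  have h_k : k % p ^ j ≤ k := Nat.mod_le k _
  omega

theorem two_pow_mul_card_filter_factorization_lt_le (hp : p.Prime) {J l : ℕ}
    (hl : p ^ (8 * J) ≤ l) (k n : ℕ) :
    2 ^ J * #{m ∈ Ico n (n + l) |
      m.centralBinom.factorization p < ((m + k).choose k).factorization p} ≤
        (k + 1) * (2 * l) := by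
  have hl' : p ^ J ≤ l := (Nat.pow_le_pow_right hp.pos (by omega)).trans hl
  let few := {m ∈ Ico n (n + l) | largeDigitCount p (8 * J) m < J}
  let divisible (i : ℕ) := {m ∈ Ico n (n + l) | p ^ J ∣ m + i}
  have h_subset : {m ∈ Ico n (n + l) |
      m.centralBinom.factorization p < ((m + k).choose k).factorization p} ⊆
        few ∪ (Icc 1 k).biUnion divisible := by
    intro m hm
    rw [mem_filter] at hm
    by_contra h_notMem
    simp only [few, divisible, mem_union, mem_biUnion, mem_filter, hm.1, true_and, not_or, not_lt,
      not_exists, not_and] at h_notMem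
    exact hm.2.not_ge <| calc ((m + k).choose k).factorization p
        ≤ J := factorization_choose_add_le_of_forall_not_dvd hp h_notMem.2
      _ ≤ largeDigitCount p (8 * J) m := h_notMem.1
      _ ≤ m.centralBinom.factorization p := largeDigitCount_le_factorization_centralBinom hp _ m
  have h_divisible (i : ℕ) : 2 ^ J * #(divisible i) ≤ 2 * l :=
    (Nat.mul_le_mul_right _ (Nat.pow_le_pow_left hp.two_le J)).trans
      (mul_card_filter_Ico_dvd_add_le hl' n i)
  calc 2 ^ J * #{m ∈ Ico n (n + l) |
        m.centralBinom.factorization p < ((m + k).choose k).factorization p}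
      ≤ 2 ^ J * (#few + ∑ i ∈ Icc 1 k, #(divisible i)) := by
        gcongr
        refine (card_le_card h_subset).trans ((card_union_le _ _).trans ?_)
        gcongr
        exact card_biUnion_le
    _ = 2 ^ J * #few + ∑ i ∈ Icc 1 k, 2 ^ J * #(divisible i) := by rw [mul_add, mul_sum]
    _ ≤ 2 * l + ∑ _i ∈ Icc 1 k, 2 * l :=
        add_le_add (two_pow_mul_card_filter_largeDigitCount_lt_le hp.two_le hl n)
          (sum_le_sum fun i _ ↦ h_divisible i)
    _ = (k + 1) * (2 * l) := by rw [sum_const, Nat.card_Icc, Nat.add_sub_cancel, smul_eq_mul]; ring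

end Carries

section Existence

theorem exists_mem_Ico_choose_add_dvd_centralBinom {k s l : ℕ} (hk : 2 * k ≤ 2 ^ s)
    (hl : 2 ^ (16 * s ^ 2) ≤ l) (n : ℕ) :
    ∃ m ∈ Ico n (n + l), (m + k).choose k ∣ m.centralBinom := by
  let bad (p : ℕ) := {m ∈ Ico n (n + l) |
    m.centralBinom.factorization p < ((m + k).choose k).factorization p}
  let primes := {p ∈ Ico 2 (2 * k) | p.Prime}
  have h_bad : ∀ p ∈ primes, 2 ^ (2 * s) * #(bad p) ≤ (k + 1) * (2 * l) := by
    intro p hp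
    rw [mem_filter, mem_Ico] at hp
    refine two_pow_mul_card_filter_factorization_lt_le hp.2 (le_trans ?_ hl) k n
    calc p ^ (8 * (2 * s)) ≤ (2 ^ s) ^ (8 * (2 * s)) := by gcongr; omega
      _ = 2 ^ (16 * s ^ 2) := by rw [← pow_mul]; congr 1; ring
  have h_primes : #primes * (2 * (k + 1)) < 2 ^ (2 * s) := by
    have h_card : #primes ≤ 2 * k - 2 := (card_filter_le _ _).trans (Nat.card_Ico _ _).le
    rcases k with _ | k
    · simp [primes]
    calc #primes * (2 * (k + 1 + 1)) ≤ 2 * k * (2 * (k + 1 + 1)) := by gcongr; omega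
      _ < (2 * (k + 1)) ^ 2 := by linarith
      _ ≤ 2 ^ (2 * s) := by rw [mul_comm 2 s, pow_mul]; gcongr
  have h_union : #(primes.biUnion bad) < #(Ico n (n + l)) := by
    rw [Nat.card_Ico, add_tsub_cancel_left]
    refine lt_of_mul_lt_mul_left ?_ (Nat.zero_le (2 ^ (2 * s)))
    calc 2 ^ (2 * s) * #(primes.biUnion bad)
        ≤ ∑ p ∈ primes, 2 ^ (2 * s) * #(bad p) := by rw [← mul_sum]; gcongr; exact card_biUnion_le
      _ ≤ ∑ _p ∈ primes, (k + 1) * (2 * l) := sum_le_sum h_bad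
      _ = #primes * (2 * (k + 1)) * l := by rw [sum_const, smul_eq_mul]; ring
      _ < 2 ^ (2 * s) * l := by
        have hl₀ : 0 < l := (by positivity : 0 < 2 ^ (16 * s ^ 2)).trans_le hl
        gcongr
  obtain ⟨m, hm, h_notMem⟩ := exists_mem_notMem_of_card_lt_card h_union
  refine ⟨m, hm, (Nat.factorization_prime_le_iff_dvd (Nat.choose_pos (by omega)).ne'
    m.centralBinom_ne_zero).1 fun p hp ↦ ?_⟩
  by_cases hpk : 2 * k ≤ p
  · exact factorization_choose_add_le_centralBinom_of_le hp hpk m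
  · by_contra! h_lt
    exact h_notMem (mem_biUnion.2 ⟨p, mem_filter.2 ⟨mem_Ico.2 ⟨hp.two_le, by omega⟩, hp⟩,
      mem_filter.2 ⟨hm, h_lt⟩⟩)

theorem factorial_mul_factorial_dvd_iff_choose_dvd (a c k : ℕ) :
    a.factorial * (c + k).factorial ∣ (a + c).factorial * k.factorial ↔
      (c + k).choose k ∣ (a + c).choose a := by
  have h_left : a.factorial * (c + k).factorial =
      (c + k).choose k * (a.factorial * c.factorial * k.factorial) := by
    rw [← Nat.add_choose_mul_factorial_mul_factorial c k]; ring
  have h_right : (a + c).factorial * k.factorial =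
      (a + c).choose a * (a.factorial * c.factorial * k.factorial) := by
    rw [← Nat.add_choose_mul_factorial_mul_factorial a c, Nat.choose_symm_add]; ring
  rw [h_left, h_right, Nat.mul_dvd_mul_iff_right (by positivity)]

theorem eventually_two_pow_sq_clog_le_exp {c : ℝ} (hc : 0 < c) :
    ∀ᶠ k : ℕ in atTop, (2 : ℝ) ^ (16 * Nat.clog 2 (2 * k) ^ 2) ≤ exp (c * k) := by
  have h_clog : Tendsto (fun k ↦ Nat.clog 2 (2 * k)) atTop atTop :=
    tendsto_atTop_atTop_of_monotone (fun _ _ h ↦ Nat.clog_mono_right 2 (by omega))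
      fun s ↦ ⟨2 ^ s, by
        rw [← pow_succ', Nat.clog_pow 2 _ one_lt_two]; omega⟩
  have h_bound := (isLittleO_pow_const_const_pow_of_one_lt (R := ℝ) 2 one_lt_two).bound
    (show 0 < c / (64 * log 2) by have := log_pos one_lt_two; positivity)
  filter_upwards [h_clog.eventually h_bound, eventually_ge_atTop 1] with k h_sq hk
  set s := Nat.clog 2 (2 * k)
  have h_pow : (2 : ℝ) ^ s ≤ 4 * k := by
    have h_pred : 2 ^ s.pred < 2 * k := Nat.pow_pred_clog_lt_self one_lt_two (by omega)
    have hs : s = s.pred + 1 := (Nat.succ_pred_eq_of_pos (Nat.clog_pos one_lt_two (by omega))).symm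
    rw [hs, pow_succ]
    exact_mod_cast (by omega : 2 ^ s.pred * 2 ≤ 4 * k)
  rw [← log_le_iff_le_exp (by positivity), log_pow]
  simp only [norm_pow, norm_natCast, norm_ofNat] at h_sq
  push_cast
  calc 16 * (s : ℝ) ^ 2 * log 2
      ≤ 16 * (c / (64 * log 2) * (4 * k)) * log 2 := by gcongr; exact h_sq.trans (by gcongr)
    _ = c * k := by field_simp; ring

theorem eventually_exists_factorial_mul_factorial_dvd {c : ℝ} (hc : 0 < c) :
    ∀ᶠ k : ℕ in atTop, ∃ m : ℕ, exp (c * k) ≤ m ∧ m ≤ 4 * exp (c * k) ∧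
      m.factorial * (m + k).factorial ∣ (2 * m).factorial * k.factorial := by
  filter_upwards [eventually_two_pow_sq_clog_le_exp hc] with k hk
  set M := ⌈exp (c * k)⌉₊
  have h_exp_le : exp (c * k) ≤ M := Nat.le_ceil _
  have h_threshold : 2 ^ (16 * Nat.clog 2 (2 * k) ^ 2) ≤ M := by exact_mod_cast hk.trans h_exp_le
  obtain ⟨m, hm, hdvd⟩ := exists_mem_Ico_choose_add_dvd_centralBinom
    (Nat.le_pow_clog one_lt_two (2 * k)) h_threshold M
  rw [mem_Ico] at hm
  refine ⟨m, h_exp_le.trans (by exact_mod_cast hm.1), ?_, ?_⟩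
  · have h_upper : (m : ℝ) ≤ M + M := by exact_mod_cast hm.2.le
    have h_M : (M : ℝ) < exp (c * k) + 1 := Nat.ceil_lt_add_one (exp_nonneg _)
    have h_one : 1 ≤ exp (c * k) := one_le_exp (by positivity)
    linarith
  · rw [two_mul, factorial_mul_factorial_dvd_iff_choose_dvd, ← two_mul]
    exact hdvd

theorem eventually_natCast_le_mul_exp {c δ : ℝ} (hc : 0 < c) (hδ : 0 < δ) :
    ∀ᶠ k : ℕ in atTop, (k : ℝ) ≤ δ * exp (c * k) := by
  have h_littleO : (fun x : ℝ ↦ x) =o[atTop] fun x ↦ exp (c * x) := by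
    simpa using isLittleO_pow_exp_pos_mul_atTop 1 hc
  filter_upwards [tendsto_natCast_atTop_atTop.eventually (h_littleO.bound hδ)] with k hk
  simpa using hk

theorem eventually_exists_balanced_dvd {C₁ C₂ δ : ℝ} (hC₁ : 0 < C₁) (hC : C₁ < C₂)
    (hδ : 0 < δ) :
    ∀ᶠ k : ℕ in atTop, ∃ m : ℕ, k ≤ δ * m ∧
      m.factorial * (m + k).factorial ∣ (2 * m).factorial * k.factorial ∧
      C₁ * log (2 * m) < k ∧ k < C₂ * log (2 * m) := by
  have hC₂ : 0 < C₂ := hC₁.trans hC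
  have hc : 0 < C₂⁻¹ := inv_pos.2 hC₂
  have h_slack : ∀ᶠ k : ℕ in atTop, C₁ * log 8 < (1 - C₁ * C₂⁻¹) * k :=
    (tendsto_natCast_atTop_atTop.const_mul_atTop
      (sub_pos.2 ((mul_inv_lt_iff₀ hC₂).2 (by rwa [one_mul])))).eventually_gt_atTop _
  filter_upwards [h_slack, eventually_natCast_le_mul_exp hc hδ,
    eventually_exists_factorial_mul_factorial_dvd hc]
    with k hk_slack hk_exp ⟨m, hm_lower, hm_upper, hdvd⟩
  have h_exp : 0 < exp (C₂⁻¹ * k) := exp_pos _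
  refine ⟨m, hk_exp.trans (by gcongr), hdvd, ?_, ?_⟩
  · calc C₁ * log (2 * m) ≤ C₁ * log (8 * exp (C₂⁻¹ * k)) := by
          have h_pos : 0 < 2 * (m : ℝ) := by linarith
          exact mul_le_mul_of_nonneg_left (log_le_log h_pos (by linarith)) hC₁.le
      _ = C₁ * log 8 + C₁ * C₂⁻¹ * k := by
          rw [log_mul (by norm_num) h_exp.ne', log_exp]; ring
      _ < k := by linarith
  · calc (k : ℝ) = C₂ * log (exp (C₂⁻¹ * k)) := by rw [log_exp, mul_inv_cancel_left₀ hC₂.ne']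
      _ < C₂ * log (2 * m) := by gcongr; linarith

end Existence

theorem stmt14 (C₁ C₂ ε : ℝ) (hC₁ : 0 < C₁) (hC : C₁ < C₂)
    (hε0 : 0 < ε) (hε1 : ε < 1 / 2) :
    {x : ℕ × ℕ × ℕ |
        ε * x.2.2 ≤ (x.1 : ℝ) ∧ (x.1 : ℝ) ≤ (1 - ε) * x.2.2 ∧
        ε * x.2.2 ≤ (x.2.1 : ℝ) ∧ (x.2.1 : ℝ) ≤ (1 - ε) * x.2.2 ∧
        x.1.factorial * x.2.1.factorial ∣
          x.2.2.factorial * (x.1 + x.2.1 - x.2.2).factorial ∧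
        C₁ * Real.log x.2.2 < ((x.1 + x.2.1 - x.2.2 : ℕ) : ℝ) ∧
        ((x.1 + x.2.1 - x.2.2 : ℕ) : ℝ) < C₂ * Real.log x.2.2}.Infinite := by
  refine Set.Infinite.of_image (fun x : ℕ × ℕ × ℕ ↦ x.1 + x.2.1 - x.2.2)
    (Set.infinite_of_forall_exists_gt fun N ↦ ?_)
  obtain ⟨k, ⟨m, h_balanced, hdvd, h_lower, h_upper⟩, hkN⟩ :=
    ((eventually_exists_balanced_dvd hC₁ hC (by linarith : 0 < 1 - 2 * ε)).and
      (eventually_gt_atTop N)).exists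
  have h_gap : m + (m + k) - 2 * m = k := by omega
  refine ⟨k, ⟨(m, m + k, 2 * m), ?_, h_gap⟩, hkN⟩
  have h_half : ε * m ≤ 1 / 2 * m := by gcongr
  have hk : (0 : ℝ) ≤ k := k.cast_nonneg
  simp only [Set.mem_ofPred_eq, h_gap]
  push_cast
  exact ⟨by linarith [h_half], by linarith [h_half], by linarith [h_half, hk],
    by linarith [h_balanced], hdvd, h_lower, h_upper⟩
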